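/- arXiv:2602.24274 — 2 statements merged into one kernel-verified Lean document; each statement's English description precedes it below -/
import Mathlib

section
/- Let (G, A) be a 3-colored digraph. If G has a unique perfect matching, then det A ≠ 0. -/
/-!
The determinant is computed modulo the prime `1 + i` of the Gaussian integers. All four
units `1, -1, i, -i` reduce to `1` in `ℤ[i] / (1 + i) = ZMod 2`, so `det A` reduces to the
determinant of the adjacency matrix of `G` over `ZMod 2`, and it suffices that the latter is
nonzero (`det_adj_ne_zero`).

In the Leibniz expansion of this determinant the terms of `σ` and `σ⁻¹` agree, since the matrix
is symmetric, and so they cancel in pairs in characteristic two. Only involutions `σ` with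
`v` adjacent to `σ v` for all `v` remain; these correspond to the perfect matchings of `G`
(`exists_partner`, `isPM_of_involutive`), so exactly one nonzero term is left.
-/


open SimpleGraph

/-- A perfect matching of a simple graph, given as a finite set of edges in which
every vertex lies in exactly one edge. -/
def IsPM {V : Type*} [DecidableEq V] (G : SimpleGraph V) (M : Finset (Sym2 V)) : Prop :=
  (∀ e ∈ M, e ∈ G.edgeSet) ∧ ∀ v : V, (M.filter (fun e => v ∈ e)).card = 1

/-- `G` has a perfect matching. -/
def HasPM {V : Type*} [DecidableEq V] (G : SimpleGraph V) : Prop :=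
  ∃ M, IsPM G M

/-- `(G, A)` is a 3-colored digraph: `A` is Hermitian with zero diagonal, entries in
`{1, -1, i, -i}` on edges of `G`, and `0` on non-edges. -/
def ThreeColored {V : Type*} (G : SimpleGraph V) (A : Matrix V V ℂ) : Prop :=
  A.IsHermitian ∧ (∀ v, A v v = 0) ∧
    (∀ u v, G.Adj u v → A u v ∈ ({1, -1, Complex.I, -Complex.I} : Set ℂ)) ∧
    (∀ u v, u ≠ v → ¬ G.Adj u v → A u v = 0)

/-- The weight of a walk: the product of the entries of `A` along its darts. -/
def walkWeight {V : Type*} {G : SimpleGraph V} (A : Matrix V V ℂ) {u v : V}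
    (p : G.Walk u v) : ℂ :=
  (p.darts.map (fun d => A d.toProd.1 d.toProd.2)).prod

/-- A closed walk (e.g. a cycle) `c` is independent in `G` if `G - V(c)` has a
perfect matching. -/
def IsIndep {V : Type*} [DecidableEq V] (G : SimpleGraph V) {u : V} (c : G.Walk u u) : Prop :=
  HasPM (G.induce {x : V | x ∉ c.support})

/-- The number of perfect matchings of `G`. -/
noncomputable def numPM (V : Type*) [DecidableEq V] (G : SimpleGraph V) : ℕ :=
  {M : Finset (Sym2 V) | IsPM G M}.ncard

/-- A connected graph on `n` vertices is unicyclic if it has exactly `n` edges. -/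
def Unicyclic (V : Type*) [Fintype V] (G : SimpleGraph V) : Prop :=
  G.Connected ∧ G.edgeSet.ncard = Fintype.card V

/-- A connected graph on `n` vertices is bicyclic if it has exactly `n + 1` edges. -/
def Bicyclic (V : Type*) [Fintype V] (G : SimpleGraph V) : Prop :=
  G.Connected ∧ G.edgeSet.ncard = Fintype.card V + 1

/-- Two cycles are regarded as the same cycle when they have the same edge set. -/
def SameCycle {V : Type*} [DecidableEq V] {G : SimpleGraph V} {u v : V}
    (c : G.Walk u u) (d : G.Walk v v) : Prop :=
  c.edges.toFinset = d.edges.toFinset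

/-- A bicyclic graph is of ∞-type if its cycles are pairwise edge-disjoint. -/
def InfinityType {V : Type*} [DecidableEq V] (G : SimpleGraph V) : Prop :=
  ∀ (u v : V) (c : G.Walk u u) (d : G.Walk v v), c.IsCycle → d.IsCycle →
    ¬ SameCycle c d → ∀ e ∈ c.edges, e ∉ d.edges

/-- A bicyclic graph is of θ-type if it is not of ∞-type. -/
def ThetaType {V : Type*} [DecidableEq V] (G : SimpleGraph V) : Prop :=
  ¬ InfinityType G

/-- `e` is a peg on the cycle `c`: either a chord of `c`, or an edge joining a vertex
of `c` to a vertex outside `c`. -/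
def IsPeg {V : Type*} {G : SimpleGraph V} {u : V} (c : G.Walk u u) (e : Sym2 V) : Prop :=
  ∃ x y, e = s(x, y) ∧
    ((x ∈ c.support ∧ y ∈ c.support ∧ e ∉ c.edges) ∨ (x ∈ c.support ∧ y ∉ c.support))

/-- The number of pegs on the cycle `c` relative to the perfect matching `M`. -/
noncomputable def pegCount {V : Type*} {G : SimpleGraph V} {u : V} (c : G.Walk u u)
    (M : Finset (Sym2 V)) : ℕ :=
  {e : Sym2 V | e ∈ M ∧ IsPeg c e}.ncard

/-- A path is mm-alternating relative to `M` if its edges alternately belong to `M`,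
beginning and ending with edges of `M`. -/
def MMAlt {V : Type*} {G : SimpleGraph V} (M : Finset (Sym2 V)) {a b : V}
    (p : G.Walk a b) : Prop :=
  p.IsPath ∧ Odd p.length ∧
    ∀ (k : ℕ) (h : k < p.edges.length), (p.edges.get ⟨k, h⟩ ∈ M ↔ Even k)

/-- Mapping each vertex to its partner encodes a perfect matching as a function. -/
lemma exists_partner {V : Type*} [DecidableEq V] {G : SimpleGraph V} {M : Finset (Sym2 V)}
    (hM : IsPM G M) : ∃ f : V → V, ∀ v w, s(v, w) ∈ M ↔ w = f v := by
  have h : ∀ v, ∃ x, ∀ w, s(v, w) ∈ M ↔ w = x := by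
    intro v
    obtain ⟨e, he⟩ := Finset.card_eq_one.mp (hM.2 v)
    have he' : ∀ e', e' ∈ M ∧ v ∈ e' ↔ e' = e := by
      intro e'
      rw [← Finset.mem_singleton, ← he, Finset.mem_filter]
    obtain ⟨x, rfl⟩ := ((he' e).2 rfl).2
    refine ⟨x, fun w => ?_⟩
    have := he' s(v, w)
    simp only [Sym2.mem_iff, true_or, and_true] at this
    rw [this, Sym2.congr_right]
  choose f hf using h
  exact ⟨f, hf⟩

/-- The 2-cycles of an involution moving every vertex to a neighbour form a perfect matching. -/
lemma isPM_of_involutive {V : Type*} [Fintype V] [DecidableEq V] {G : SimpleGraph V}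
    {f : V → V} (hf : Function.Involutive f) (hadj : ∀ v, G.Adj v (f v)) :
    IsPM G (Finset.univ.image fun v => s(v, f v)) := by
  refine ⟨?_, fun v => Finset.card_eq_one.mpr ⟨s(v, f v), ?_⟩⟩
  · intro e he
    obtain ⟨v, -, rfl⟩ := Finset.mem_image.mp he
    exact hadj v
  · ext e
    simp only [Finset.mem_filter, Finset.mem_image, Finset.mem_univ, true_and,
      Finset.mem_singleton]
    constructor
    · rintro ⟨⟨w, rfl⟩, hv⟩
      rcases Sym2.mem_iff.mp hv with rfl | rfl
      · rfl
      · rw [hf w, Sym2.eq_swap]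
    · rintro rfl
      exact ⟨⟨v, rfl⟩, Sym2.mem_mk_left _ _⟩

open Classical in
/-- The adjacency matrix of a graph with a unique perfect matching is nonsingular modulo 2. -/
lemma det_adj_ne_zero {V : Type*} [Fintype V] [DecidableEq V] (G : SimpleGraph V)
    (hu : ∃! M, IsPM G M) :
    (Matrix.of fun u v => if G.Adj u v then (1 : ZMod 2) else 0).det ≠ 0 := by
  obtain ⟨M, hM, huniq⟩ := hu
  obtain ⟨f, hf⟩ := exists_partner hM
  have hinv : Function.Involutive f := by
    intro v
    have h : s(f v, v) ∈ M := by rw [Sym2.eq_swap]; exact (hf v _).2 rfl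
    exact ((hf _ _).1 h).symm
  have hadj : ∀ v, G.Adj (f v) v := fun v => (hM.1 _ ((hf v _).2 rfl)).symm
  rw [Matrix.det_apply', ← Finset.add_sum_erase _ _ (Finset.mem_univ (hinv.toPerm f))]
  -- All terms other than that of the matching involution cancel in pairs `σ, σ⁻¹`.
  rw [Finset.sum_involution (fun σ _ => σ⁻¹), add_zero]
  · have h1 : ∏ i, (Matrix.of fun u v => if G.Adj u v then (1 : ZMod 2) else 0)
        ((hinv.toPerm f) i) i = 1 :=
      Finset.prod_eq_one fun i _ => by simp [hadj i]
    rw [h1, mul_one]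
    rcases Int.units_eq_one_or (Equiv.Perm.sign (hinv.toPerm f)) with h | h <;> rw [h] <;> decide
  · intro σ _
    have h1 : ∏ i, (Matrix.of fun u v => if G.Adj u v then (1 : ZMod 2) else 0) (σ⁻¹ i) i
        = ∏ i, (Matrix.of fun u v => if G.Adj u v then (1 : ZMod 2) else 0) (σ i) i := by
      rw [← Equiv.prod_comp σ]
      refine Finset.prod_congr rfl fun i _ => ?_
      simp [G.adj_comm]
    rw [Equiv.Perm.sign_inv, h1]
    exact CharTwo.add_self_eq_zero _
  · intro σ hσ hne heq
    refine (Finset.mem_erase.mp hσ).1 ?_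
    have hσi : Function.Involutive σ := fun v => by
      rw [← Equiv.Perm.eq_inv_iff_eq, heq]
    have hσa : ∀ v, G.Adj v (σ v) := by
      intro v
      by_contra hv
      refine hne (mul_eq_zero_of_right _ (Finset.prod_eq_zero (Finset.mem_univ v) ?_))
      simp [G.adj_comm, hv]
    have hMσ := huniq _ (isPM_of_involutive hσi hσa)
    ext v
    refine (hf v _).1 ?_
    rw [← hMσ]
    exact Finset.mem_image_of_mem _ (Finset.mem_univ v)
  · intro σ hσ
    refine Finset.mem_erase.mpr ⟨fun h => (Finset.mem_erase.mp hσ).1 ?_, Finset.mem_univ _⟩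
    rw [← inv_inv σ, h]
    ext v
    rfl
  · intro σ _
    exact inv_inv σ

/-- A 3-colored digraph with a unique perfect matching is non-singular. -/
theorem stmt1 {V : Type*} [Fintype V] [DecidableEq V] (G : SimpleGraph V)
    (A : Matrix V V ℂ) (hA : ThreeColored G A) (hu : ∃! M, IsPM G M) :
    A.det ≠ 0 := by
  classical
  obtain ⟨-, hdiag, hedge, hnon⟩ := hA
  -- Reduction modulo `1 + i`: the ring homomorphism `ℤ[i] → ZMod 2` with `i ↦ 1`.
  let φ : GaussianInt →+* ZMod 2 := Zsqrtd.lift ⟨1, by decide⟩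
  have hB : ∀ u v, ∃ b : GaussianInt, GaussianInt.toComplex b = A u v ∧
      φ b = if G.Adj u v then 1 else 0 := by
    intro u v
    by_cases h : G.Adj u v
    · have hI : φ ⟨0, 1⟩ = 1 := by simp [φ, Zsqrtd.lift]
      have hIc : GaussianInt.toComplex ⟨0, 1⟩ = Complex.I := by
        simp [GaussianInt.toComplex_def]
      rw [if_pos h]
      rcases hedge u v h with h | h | h | h
      · exact ⟨1, by rw [h, map_one], map_one _⟩
      · exact ⟨-1, by rw [h, map_neg, map_one], by rw [map_neg, map_one]; decide⟩
      · exact ⟨⟨0, 1⟩, by rw [h, hIc], hI⟩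
      · exact ⟨-⟨0, 1⟩, by rw [h, map_neg, hIc], by rw [map_neg, hI]; decide⟩
    · have h0 : A u v = 0 := by
        by_cases huv : u = v
        · rw [huv, hdiag]
        · exact hnon u v huv h
      exact ⟨0, by rw [h0, map_zero], by rw [if_neg h, map_zero]⟩
  choose B hBA hBφ using hB
  have h1 : A = GaussianInt.toComplex.mapMatrix (Matrix.of B) := by
    ext u v
    exact (hBA u v).symm
  have h2 : φ.mapMatrix (Matrix.of B)
      = Matrix.of fun u v => if G.Adj u v then (1 : ZMod 2) else 0 := by
    ext u v
    exact hBφ u v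
  rw [h1, ← RingHom.map_det]
  intro h
  have h0 : (Matrix.of B).det = 0 := GaussianInt.toComplex_eq_zero.mp h
  apply det_adj_ne_zero G hu
  rw [← h2, ← RingHom.map_det, h0, map_zero]
end

section
/- Let (B, A) be a 3-colored digraph where B is a connected bicyclic graph on n vertices that has a perfect matching and exactly one independent cycle Γ (so Γ is even and n is even). Then det A = 2·(−1)^{n/2}·(1 − w(Γ)·(−1)^{|Γ|/2}) if w(Γ) ∈ {1, −1}, and det A = 2·(−1)^{n/2} if w(Γ) ∈ {i, −i}. -/
/-!
The determinant is expanded over permutations `σ`. A term is nonzero only if `σ` moves every vertex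
to a neighbour; call such a `σ` contributing. Write `w` for the weight of `Γ`.

* Contributing involutions are perfect matchings. The symmetric difference of two perfect matchings
  is a disjoint union of cycles, each of which is independent, hence equal to `Γ`. So there are
  exactly two perfect matchings `α`, `β`: they alternate along `Γ` and agree off it
  (`Setup.involution_eq`). Each contributes `(-1) ^ (n / 2)`.
* A contributing `σ` that is not an involution has an orbit of length at least three, which is a
  cycle of the graph. Two such orbits would be disjoint cycles. Deleting an edge from each of two
  edge-disjoint cycles of a bicyclic graph leaves a spanning tree, so there is no third cycle
  (`bicyclic_cycle_eq`), and one of the two is `Γ`. Since `Γ` is even it can be replaced by one of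
  its alternating matchings, so the other one is independent too, contradicting uniqueness
  (`Setup.no_second_cycle`). Hence `σ` has a single long orbit, which is therefore independent and
  equal to `Γ`: `σ` is the rotation of `Γ` in one of the two directions, and agrees with `α`
  elsewhere (`Setup.eq_of_not_involution`). These two permutations contribute
  `-(-1) ^ ((n - |Γ|) / 2)` times `w` and its conjugate.

Therefore `det A = (-1) ^ (n / 2) * (2 - (-1) ^ (|Γ| / 2) * (w + star w))` (`det_eq`), which gives
both cases of the theorem.
-/

open SimpleGraph

/-! ### Cycles in bicyclic graphs -/

lemma cycle_support_iff {V : Type*} {G : SimpleGraph V} {u : V} {c : G.Walk u u}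
    (hc : c.IsCycle) (x : V) : x ∈ c.support ↔ ∃ y, s(x, y) ∈ c.edges := by
  rw [Walk.mem_support_iff_exists_mem_edges_of_not_nil hc.not_nil]
  constructor
  · rintro ⟨e, he, y, rfl⟩
    exact ⟨y, he⟩
  · rintro ⟨y, hy⟩
    exact ⟨_, hy, by simp⟩

/-- A vertex set that meets a closed walk and is closed under following its edges contains the
whole walk. -/
lemma support_subset_of_closed {V : Type*} [DecidableEq V] {G : SimpleGraph V} {u x₀ : V}
    (c : G.Walk u u) (S : Set V) (hS : ∀ x y, x ∈ S → s(x, y) ∈ c.edges → y ∈ S)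
    (h₀ : x₀ ∈ c.support) (h₁ : x₀ ∈ S) : ∀ y ∈ c.support, y ∈ S := by
  have key : ∀ {a b : V} (p : G.Walk a b), (∀ x y, x ∈ S → s(x, y) ∈ p.edges → y ∈ S) →
      a ∈ S → ∀ y ∈ p.support, y ∈ S := by
    intro a b p
    induction p with
    | nil => intro _ ha y hy; simp at hy; exact hy ▸ ha
    | cons h p ih =>
      intro hp ha y hy
      rw [Walk.support_cons, List.mem_cons] at hy
      rcases hy with rfl | hy
      · exact ha
      · exact ih (fun x y hx he => hp x y hx (by simp [he])) (hp _ _ ha (by simp)) y hy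
  intro y hy
  refine key (c.rotate x₀ h₀) (fun x y hx he => hS x y hx ?_) h₁ y ?_
  · exact (c.rotate_edges x₀ h₀).mem_iff.mp he
  · exact (c.mem_support_rotate_iff x₀ h₀).mpr hy

/-- A cycle contained in another cycle is equal to it: both are 2-regular and connected. -/
lemma edges_eq_of_subset {V : Type*} [DecidableEq V] {G : SimpleGraph V} {u v : V}
    {c : G.Walk u u} {d : G.Walk v v} (hc : c.IsCycle) (hd : d.IsCycle)
    (h : ∀ e ∈ c.edges, e ∈ d.edges) (e : Sym2 V) : e ∈ c.edges ↔ e ∈ d.edges := by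
  have hsub : ∀ x ∈ c.support, x ∈ d.support := fun x hx => by
    rw [cycle_support_iff hc] at hx
    obtain ⟨y, hy⟩ := hx
    exact (cycle_support_iff hd x).mpr ⟨y, h _ hy⟩
  have hnb : ∀ x y, x ∈ c.support → s(x, y) ∈ d.edges → s(x, y) ∈ c.edges := by
    intro x y hx hxy
    have h1 := hc.ncard_neighborSet_toSubgraph_eq_two hx
    have h2 := hd.ncard_neighborSet_toSubgraph_eq_two (hsub x hx)
    have hss : c.toSubgraph.neighborSet x ⊆ d.toSubgraph.neighborSet x := by
      intro z hz
      rw [Subgraph.mem_neighborSet, Walk.adj_toSubgraph_iff_mem_edges] at hz ⊢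
      exact h _ hz
    have heq := Set.eq_of_subset_of_ncard_le hss (by omega)
      (Set.finite_of_ncard_ne_zero (by omega))
    have hy : y ∈ d.toSubgraph.neighborSet x := by
      rw [Subgraph.mem_neighborSet, Walk.adj_toSubgraph_iff_mem_edges]; exact hxy
    rw [← heq, Subgraph.mem_neighborSet, Walk.adj_toSubgraph_iff_mem_edges] at hy
    exact hy
  have hall := support_subset_of_closed d {x | x ∈ c.support}
    (fun x y hx hxy => c.snd_mem_support_of_mem_edges (hnb x y hx hxy))
    (hsub u c.start_mem_support) c.start_mem_support
  refine ⟨h e, ?_⟩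
  induction e with
  | h x y =>
    intro he
    exact hnb x y (hall x (d.fst_mem_support_of_mem_edges he)) he

/-- In a bicyclic graph with two edge-disjoint cycles there is no third cycle: deleting an edge
from each of the two cycles leaves a spanning tree. -/
lemma bicyclic_cycle_eq {V : Type*} [Fintype V] [DecidableEq V] {B : SimpleGraph V}
    (hB : Bicyclic V B) {u v w : V} {c : B.Walk u u} {d : B.Walk v v} {g : B.Walk w w}
    (hc : c.IsCycle) (hd : d.IsCycle) (hg : g.IsCycle) (hcd : ∀ e ∈ c.edges, e ∉ d.edges) :
    (∀ e, e ∈ c.edges ↔ e ∈ g.edges) ∨ (∀ e, e ∈ d.edges ↔ e ∈ g.edges) := by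
  by_contra hcon
  rw [not_or] at hcon
  obtain ⟨e, hec, heg⟩ : ∃ e ∈ c.edges, e ∉ g.edges := by
    by_contra h; push Not at h
    exact hcon.1 (edges_eq_of_subset hc hg h)
  obtain ⟨f, hfd, hfg⟩ : ∃ e ∈ d.edges, e ∉ g.edges := by
    by_contra h; push Not at h
    exact hcon.2 (edges_eq_of_subset hd hg h)
  have hef : e ≠ f := fun h => hcd e hec (h ▸ hfd)
  have conn : ∀ {H : SimpleGraph V} {a : V} {p : H.Walk a a} {e : Sym2 V}, H.Connected →
      p.IsCycle → e ∈ p.edges → (H.deleteEdges {e}).Connected := by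
    intro H a p e hH hp he
    induction e with
    | h x y =>
      exact hH.connected_delete_edge_of_not_isBridge fun hb => hb.notMem_edges_of_isCycle hp he
  have h1 : (B.deleteEdges {e}).Connected := conn hB.1 hc hec
  have hdt : ∀ e' ∈ d.edges, e' ∈ (B.deleteEdges {e}).edgeSet := by
    intro e' he'
    rw [edgeSet_deleteEdges]
    exact ⟨d.edges_subset_edgeSet he', fun h => hcd e hec (h ▸ he')⟩
  have h2 : ((B.deleteEdges {e}).deleteEdges {f}).Connected :=
    conn h1 (hd.transfer hdt) (by rw [Walk.edges_transfer]; exact hfd)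
  have hgt : ∀ e' ∈ g.edges, e' ∈ ((B.deleteEdges {e}).deleteEdges {f}).edgeSet := by
    intro e' he'
    rw [edgeSet_deleteEdges, edgeSet_deleteEdges]
    exact ⟨⟨g.edges_subset_edgeSet he', fun h => heg (h ▸ he')⟩, fun h => hfg (h ▸ he')⟩
  have htree : ((B.deleteEdges {e}).deleteEdges {f}).IsTree := by
    rw [isTree_iff_connected_and_card]
    refine ⟨h2, ?_⟩
    have he1 : e ∈ B.edgeSet := c.edges_subset_edgeSet hec
    have hf1 : f ∈ B.edgeSet \ {e} := ⟨d.edges_subset_edgeSet hfd, fun h => hef h.symm⟩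
    have c1 := Set.ncard_sdiff_singleton_add_one hf1 (Set.toFinite _)
    have c2 := Set.ncard_sdiff_singleton_add_one he1 (Set.toFinite _)
    have c3 := hB.2
    rw [Nat.card_coe_set_eq, edgeSet_deleteEdges, edgeSet_deleteEdges, Nat.card_eq_fintype_card]
    omega
  exact htree.isAcyclic _ (hg.transfer hgt)

/-! ### Cycles, permutations and matchings -/

/-- If `f` and `g` are two involutions, or `g` is the inverse of `f`, the edges `{y, f y}` and
`{y, g y}` at the points where `f` and `g` differ form a disjoint union of cycles; this is the one
through `x`. For involutions it is a component of the symmetric difference of two perfect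
matchings, for `g = f⁻¹` an orbit of `f` of length at least three. -/
lemma exists_cycle_of_perms {V : Type*} [Fintype V] [DecidableEq V] {B : SimpleGraph V}
    (f g : Equiv.Perm V) (hf : ∀ x, B.Adj x (f x)) (hg : ∀ x, B.Adj x (g x))
    (hfg : ((∀ x, f (f x) = x) ∧ ∀ x, g (g x) = x) ∨ g = f.symm) {x : V} (hx : f x ≠ g x) :
    ∃ c : B.Walk x x, c.IsCycle ∧ (∀ y ∈ c.support, f y ≠ g y) ∧
      ∀ y ∈ c.support, ∀ z, s(y, z) ∈ c.edges ↔ (z = f y ∨ z = g y) := by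
  have hsymm : ∀ y z, f y ≠ g y → (z = f y ∨ z = g y) → f z ≠ g z ∧ (y = f z ∨ y = g z) := by
    intro y z hy hz
    rcases hfg with ⟨h1, h2⟩ | rfl
    · rcases hz with rfl | rfl
      · refine ⟨fun h => hy ?_, Or.inl (h1 y).symm⟩
        rw [h1] at h
        rw [h, h2, ← h]
      · refine ⟨fun h => hy ?_, Or.inr (h2 y).symm⟩
        rw [h2] at h
        rw [← h, h1, h]
    · rcases hz with rfl | rfl
      · refine ⟨fun h => hy ?_, Or.inr (by simp)⟩
        rw [Equiv.symm_apply_apply] at h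
        rw [Equiv.eq_symm_apply]; exact h
      · refine ⟨fun h => hy ?_, Or.inl (by simp)⟩
        rw [Equiv.apply_symm_apply, Equiv.eq_symm_apply, Equiv.eq_symm_apply] at h
        rw [Equiv.eq_symm_apply]; exact h
  let H : SimpleGraph V :=
    { Adj := fun y z => f y ≠ g y ∧ (z = f y ∨ z = g y)
      symm := ⟨fun y z h => hsymm y z h.1 h.2⟩
      loopless := ⟨fun y h => by
        rcases h.2 with h | h
        · exact (hf y).ne h
        · exact (hg y).ne h⟩ }
  have hHB : H ≤ B := by
    rintro y z ⟨-, rfl | rfl⟩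
    · exact hf y
    · exact hg y
  have hnb : ∀ y, f y ≠ g y → H.neighborSet y = {f y, g y} := by
    intro y hy
    ext z
    simp [H, hy]
  have hcyc : H.IsCycles := by
    rintro y ⟨z, hz⟩
    rw [hnb y hz.1, Set.ncard_pair hz.1]
  obtain ⟨p, hp, hps⟩ := hcyc.exists_cycle_toSubgraph_verts_eq_connectedComponentSupp
    (c := H.connectedComponentMk x) (v := x) rfl ⟨f x, hx, Or.inl rfl⟩
  classical
  have hmem : ∀ y ∈ p.support, f y ≠ g y := by
    intro y hy
    obtain ⟨z, hz⟩ := (cycle_support_iff hp y).mp hy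
    exact (p.adj_of_mem_edges hz).1
  refine ⟨p.mapLe hHB, hp.mapLe hHB, ?_, ?_⟩
  · simpa using hmem
  · intro y hy z
    have hy' : y ∈ p.support := by simpa using hy
    have := hp.adj_toSubgraph_iff_of_isCycles hcyc (v := y) (by simpa using hy') z
    rw [Walk.adj_toSubgraph_iff_mem_edges] at this
    rw [Walk.edges_mapLe_eq_edges, this]
    exact ⟨fun h => h.2, fun h => ⟨hmem y hy', h⟩⟩

/-- An adjacency involution off the vertices of `c` gives a perfect matching of `G - V(c)`. -/
lemma isIndep_of_involution {V : Type*} [Fintype V] [DecidableEq V] {G : SimpleGraph V} {u : V}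
    (c : G.Walk u u) (f : V → V)
    (hf : ∀ x, x ∉ c.support → G.Adj x (f x) ∧ f x ∉ c.support ∧ f (f x) = x) :
    IsIndep G c := by
  classical
  let f' : {x : V | x ∉ c.support} → {x : V | x ∉ c.support} :=
    fun x => ⟨f x.1, (hf x.1 x.2).2.1⟩
  have hf' : ∀ x, f' (f' x) = x := fun x => Subtype.ext (hf x.1 x.2).2.2
  refine ⟨Finset.univ.image fun x => s(x, f' x), ?_, ?_⟩
  · intro e he
    obtain ⟨x, -, rfl⟩ := Finset.mem_image.mp he
    exact (hf x.1 x.2).1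
  · intro v
    rw [Finset.card_eq_one]
    refine ⟨s(v, f' v), ?_⟩
    ext e
    simp only [Finset.mem_filter, Finset.mem_image, Finset.mem_univ, true_and,
      Finset.mem_singleton]
    constructor
    · rintro ⟨⟨x, rfl⟩, hv⟩
      rcases Sym2.mem_iff.mp hv with rfl | rfl
      · rfl
      · rw [hf', Sym2.eq_swap]
    · rintro rfl
      exact ⟨⟨v, rfl⟩, by simp⟩

/-- A perfect matching, as the involution exchanging matched vertices. -/
lemma involution_of_hasPM {V : Type*} [DecidableEq V] {G : SimpleGraph V} (h : HasPM G) :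
    ∃ f : V → V, ∀ x, G.Adj x (f x) ∧ f (f x) = x := by
  obtain ⟨M, hM, hM1⟩ := h
  have hex : ∀ x, ∃ y, s(x, y) ∈ M := by
    intro x
    obtain ⟨e, he⟩ := Finset.card_eq_one.mp (hM1 x)
    have : e ∈ M.filter (fun e => x ∈ e) := by rw [he]; simp
    rw [Finset.mem_filter] at this
    obtain ⟨y, rfl⟩ := this.2
    exact ⟨y, this.1⟩
  choose g hg using hex
  refine ⟨g, fun x => ⟨hM _ (hg x), ?_⟩⟩
  have := Finset.card_le_one.mp (hM1 (g x)).le s(g x, g (g x)) (by simp [hg]) s(g x, x)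
    (by rw [Sym2.eq_swap]; simp [hg])
  exact Sym2.congr_right.mp this

lemma involution_of_isIndep {V : Type*} [DecidableEq V] {G : SimpleGraph V} {u : V}
    {c : G.Walk u u} (h : IsIndep G c) :
    ∃ f : V → V, ∀ x, x ∉ c.support → G.Adj x (f x) ∧ f x ∉ c.support ∧ f (f x) = x := by
  obtain ⟨g, hg⟩ := involution_of_hasPM h
  refine ⟨fun x => if hx : x ∉ c.support then (g ⟨x, hx⟩).1 else x, fun x hx => ?_⟩
  have h2 : (g ⟨x, hx⟩).1 ∉ c.support := (g ⟨x, hx⟩).2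
  refine ⟨?_, ?_, ?_⟩
  · simp only [dif_pos hx]
    exact (hg ⟨x, hx⟩).1
  · simpa only [dif_pos hx] using h2
  · simp only [dif_pos hx, dif_pos h2]
    exact congrArg Subtype.val (hg ⟨x, hx⟩).2

/-! ### The rotation along a cycle -/

/-- What is used of the permutation `γ` moving each vertex of a cycle `c` to the next one, together
with a predicate `ε` that 2-colours the vertices of `c` when `c` is even. -/
structure Rotation {V : Type*} [Fintype V] [DecidableEq V] {G : SimpleGraph V} {u : V}
    (c : G.Walk u u) (γ : Equiv.Perm V) (ε : V → Prop) : Prop where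
  fix : ∀ x, x ∉ c.support → γ x = x
  mem : ∀ x, x ∈ c.support → γ x ∈ c.support
  symm_mem : ∀ x, x ∈ c.support → γ.symm x ∈ c.support
  edge : ∀ x ∈ c.support, ∀ z, s(x, z) ∈ c.edges ↔ (z = γ x ∨ z = γ.symm x)
  ne : ∀ x ∈ c.support, γ x ≠ γ.symm x
  weight : ∀ A : Matrix V V ℂ, walkWeight A c = ∏ x ∈ c.support.toFinset, A x (γ x)
  card : c.support.toFinset.card = c.length
  sign : Equiv.Perm.sign γ = -(-1) ^ c.length
  /-- `γ` acts transitively on the vertices of `c`. -/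
  trans : ∀ T : Set V, u ∈ T → (∀ x ∈ T, γ x ∈ T) → ∀ x ∈ c.support, x ∈ T
  color : Even c.length → ∀ x ∈ c.support, (ε (γ x) ↔ ¬ ε x)

lemma exists_rotation {V : Type*} [Fintype V] [DecidableEq V] {G : SimpleGraph V} {u : V}
    {c : G.Walk u u} (hc : c.IsCycle) : ∃ γ ε, Rotation c γ ε := by
  have hn := hc.three_le_length
  have hinj : ∀ i j, i < c.length → j < c.length → c.getVert i = c.getVert j → i = j :=
    fun i j hi hj h => hc.getVert_injOn' (by simp; omega) (by simp; omega) h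
  have hend : c.getVert c.length = c.getVert 0 := by simp
  have hsup : ∀ x, x ∈ c.support ↔ ∃ i < c.length, c.getVert i = x := by
    intro x
    rw [Walk.mem_support_iff_exists_getVert]
    constructor
    · rintro ⟨i, rfl, hi⟩
      rcases hi.lt_or_eq with h | rfl
      · exact ⟨i, h, rfl⟩
      · exact ⟨0, by omega, hend.symm⟩
    · rintro ⟨i, hi, rfl⟩
      exact ⟨i, rfl, hi.le⟩
  have hnd : ((List.range c.length).map c.getVert).Nodup := by
    refine List.Nodup.map_on ?_ List.nodup_range
    intro i hi j hj h
    exact hinj i j (List.mem_range.mp hi) (List.mem_range.mp hj) h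
  have hfin : ((List.range c.length).map c.getVert).toFinset = c.support.toFinset := by
    ext x
    simp [hsup]
  have himg : c.support.toFinset = (Finset.range c.length).image c.getVert := by
    ext x
    simp [hsup]
  have hcard : c.support.toFinset.card = c.length := by
    rw [← hfin, List.toFinset_card_of_nodup hnd]; simp
  have hsupp : ((List.range c.length).map c.getVert).formPerm.support = c.support.toFinset := by
    rw [← hfin]
    refine List.support_formPerm_of_nodup _ hnd fun x hx => ?_
    have := congrArg List.length hx
    simp at this
    omega
  have hsign : Equiv.Perm.sign ((List.range c.length).map c.getVert).formPerm
      = -(-1) ^ c.length := by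
    rw [(List.isCycle_formPerm hnd (by simp; omega)).sign, hsupp, hcard]
  have hstep : ∀ i < c.length, ((List.range c.length).map c.getVert).formPerm (c.getVert i)
      = c.getVert (i + 1) := by
    intro i hi
    have := List.formPerm_apply_getElem _ hnd i (by simpa using hi)
    simp only [List.getElem_map, List.getElem_range, List.length_map, List.length_range] at this
    rw [this]
    rcases Nat.lt_or_ge (i + 1) c.length with h | h
    · rw [Nat.mod_eq_of_lt h]
    · have h' : i + 1 = c.length := by omega
      rw [h', Nat.mod_self, hend]
  generalize ((List.range c.length).map c.getVert).formPerm = γ at hsupp hsign hstep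
  have hmem : ∀ x, x ∈ c.support ↔ γ x ≠ x := by
    intro x
    rw [← List.mem_toFinset, ← hsupp, Equiv.Perm.mem_support]
  have hsm : ∀ x, x ∈ c.support → γ.symm x ∈ c.support := by
    intro x hx
    rw [hmem] at hx ⊢
    intro h
    rw [Equiv.apply_symm_apply] at h
    apply hx
    nth_rewrite 1 [h]
    simp
  have hedge : ∀ x ∈ c.support, ∀ z, s(x, z) ∈ c.edges ↔ (z = γ x ∨ z = γ.symm x) := by
    intro x hx z
    rw [Walk.mk_mem_edges_iff_exists]
    constructor
    · rintro ⟨i, hi, h⟩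
      rw [← hstep i hi, Sym2.eq_iff] at h
      rcases h with ⟨rfl, rfl⟩ | ⟨rfl, rfl⟩
      · exact Or.inl rfl
      · exact Or.inr (by simp)
    · rintro (rfl | rfl)
      · obtain ⟨i, hi, rfl⟩ := (hsup x).mp hx
        exact ⟨i, hi, by rw [hstep i hi]⟩
      · obtain ⟨i, hi, h⟩ := (hsup _).mp (hsm x hx)
        exact ⟨i, hi, by rw [← hstep i hi, h, Equiv.apply_symm_apply, Sym2.eq_swap]⟩
  -- the colour of a vertex is the parity of its position on `c`
  refine ⟨γ, fun x => ∃ i < c.length, Even i ∧ c.getVert i = x, ?_⟩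
  refine ⟨?_, ?_, hsm, hedge, ?_, ?_, hcard, hsign, ?_, ?_⟩
  · intro x hx
    rw [hmem] at hx
    simpa using hx
  · intro x hx
    rw [hmem] at hx ⊢
    simpa using hx
  · intro x hx h
    have h2 := hc.ncard_neighborSet_toSubgraph_eq_two hx
    have : c.toSubgraph.neighborSet x = {γ x} := by
      ext z
      rw [Subgraph.mem_neighborSet, Walk.adj_toSubgraph_iff_mem_edges, hedge x hx, ← h]
      simp
    rw [this, Set.ncard_singleton] at h2
    omega
  · intro A
    rw [himg, Finset.prod_image (fun i hi j hj h =>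
      hinj i j (by simpa using hi) (by simpa using hj) h), walkWeight,
      Finset.prod_range, ← List.prod_ofFn]
    congr 1
    apply List.ext_getElem
    · simp
    · intro i h1 h2
      have hi : i < c.length := by simpa using h2
      simp only [List.getElem_map, List.getElem_ofFn, Walk.darts_getElem_eq_getVert, hstep i hi]
  · intro T hu hT x hx
    obtain ⟨i, hi, rfl⟩ := (hsup x).mp hx
    induction i with
    | zero => simpa using hu
    | succ i ih =>
      rw [← hstep i (by omega)]
      exact hT _ (ih (by omega) (c.getVert_mem_support i))
  · intro hev x hx
    have hε : ∀ i ≤ c.length,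
        ((∃ j < c.length, Even j ∧ c.getVert j = c.getVert i) ↔ Even i) := by
      intro i hi
      rcases hi.lt_or_eq with h | rfl
      · exact ⟨fun ⟨j, hj, he, h'⟩ => hinj j i hj h h' ▸ he, fun he => ⟨i, h, he, rfl⟩⟩
      · exact ⟨fun _ => hev, fun _ => ⟨0, by omega, by simp, hend.symm⟩⟩
    obtain ⟨i, hi, rfl⟩ := (hsup x).mp hx
    rw [hstep i hi, hε i hi.le, hε (i + 1) hi, Nat.even_add_one]

/-- An involution moves an even number `2 * k` of points, and its sign is `(-1) ^ k`. -/
lemma sign_involution {V : Type*} [Fintype V] [DecidableEq V] (σ : Equiv.Perm V)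
    (h : ∀ x, σ (σ x) = x) : ∃ k, σ.support.card = 2 * k ∧ Equiv.Perm.sign σ = (-1) ^ k := by
  have h2 : σ ^ 2 = 1 := by
    ext x; simp [pow_two, h]
  have hc := Multiset.eq_replicate_card.mpr (Equiv.Perm.pow_prime_eq_one_iff.mp h2)
  have hs := Equiv.Perm.sum_cycleType σ
  rw [hc, Multiset.sum_replicate, smul_eq_mul] at hs
  refine ⟨Multiset.card σ.cycleType, by omega, ?_⟩
  rw [Equiv.Perm.sign_of_cycleType, Equiv.Perm.sum_cycleType, ← hs, pow_add, pow_mul']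
  simp

/-! ### Permutations contributing to the determinant -/

/-- The hypotheses on `Γ` that matter for the classification of the permutations contributing to
the determinant: `Γ` is the only independent cycle of the bicyclic graph `B`, `γ` is its rotation,
and `α`, `β` are the two perfect matchings (as involutions) alternating along `Γ`. -/
structure Setup {V : Type*} [Fintype V] [DecidableEq V] (B : SimpleGraph V) {u : V}
    (Γ : B.Walk u u) (γ α β : Equiv.Perm V) (ε : V → Prop) : Prop where
  bi : Bicyclic V B
  cyc : Γ.IsCycle
  uniq : ∀ (v : V) (d : B.Walk v v), d.IsCycle → IsIndep B d → ∀ e, e ∈ d.edges ↔ e ∈ Γ.edges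
  rot : Rotation Γ γ ε
  adj₁ : ∀ x, B.Adj x (α x)
  adj₂ : ∀ x, B.Adj x (β x)
  inv₁ : ∀ x, α (α x) = x
  inv₂ : ∀ x, β (β x) = x
  onΓ : ∀ x ∈ Γ.support, (α x = γ x ∧ β x = γ.symm x) ∨ (α x = γ.symm x ∧ β x = γ x)
  offΓ : ∀ x, x ∉ Γ.support → α x = β x

lemma support_iff_of_edges {V : Type*} {G : SimpleGraph V} {u v : V} {c : G.Walk u u}
    {d : G.Walk v v} (hc : c.IsCycle) (hd : d.IsCycle) (h : ∀ e, e ∈ c.edges ↔ e ∈ d.edges)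
    (x : V) : x ∈ c.support ↔ x ∈ d.support := by
  simp only [cycle_support_iff hc, cycle_support_iff hd, h]

namespace Setup

variable {V : Type*} [Fintype V] [DecidableEq V] {B : SimpleGraph V} {u : V} {Γ : B.Walk u u}
  {γ α β : Equiv.Perm V} {ε : V → Prop}

lemma alpha_mem (h : Setup B Γ γ α β ε) {x : V} (hx : x ∈ Γ.support) : α x ∈ Γ.support := by
  rcases h.onΓ x hx with h1 | h1
  · rw [h1.1]; exact h.rot.mem x hx
  · rw [h1.1]; exact h.rot.symm_mem x hx

lemma alpha_ne_beta (h : Setup B Γ γ α β ε) {x : V} (hx : x ∈ Γ.support) : α x ≠ β x := by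
  have := h.rot.ne x hx
  rcases h.onΓ x hx with h1 | h1
  · rw [h1.1, h1.2]; exact this
  · rw [h1.1, h1.2]; exact this.symm

/-- The symmetric difference of two perfect matchings consists of independent cycles, so it is
empty or equal to `Γ`. -/
lemma involution_eq (h : Setup B Γ γ α β ε) (σ : Equiv.Perm V) (hadj : ∀ x, B.Adj x (σ x))
    (hinv : ∀ x, σ (σ x) = x) : σ = α ∨ σ = β := by
  have key : ∀ x, σ x ≠ α x →
      x ∈ Γ.support ∧ ∀ y ∈ Γ.support, σ y ≠ α y ∧ (σ y = γ y ∨ σ y = γ.symm y) := by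
    intro x hx
    obtain ⟨c, hc, hne, hce⟩ :=
      exists_cycle_of_perms σ α hadj h.adj₁ (Or.inl ⟨hinv, h.inv₁⟩) hx
    have hmem : ∀ y ∈ c.support, α y ∈ c.support := fun y hy =>
      c.snd_mem_support_of_mem_edges ((hce y hy _).mpr (Or.inr rfl))
    have hind : IsIndep B c := isIndep_of_involution c α fun y hy =>
      ⟨h.adj₁ y, fun hy' => hy (h.inv₁ y ▸ hmem _ hy'), h.inv₁ y⟩
    have hE := h.uniq x c hc hind
    have hS := support_iff_of_edges hc h.cyc hE
    refine ⟨(hS x).mp c.start_mem_support, fun y hy => ?_⟩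
    have hy' := (hS y).mpr hy
    refine ⟨hne y hy', ?_⟩
    rw [← h.rot.edge y hy, ← hE, hce y hy']
    exact Or.inl rfl
  by_cases hall : ∀ x, σ x = α x
  · exact Or.inl (Equiv.ext hall)
  · right
    push Not at hall
    obtain ⟨x, hx⟩ := hall
    ext y
    by_cases hy : y ∈ Γ.support
    · obtain ⟨h1, h2⟩ := (key x hx).2 y hy
      rcases h.onΓ y hy with h3 | h3 <;> rcases h2 with h2 | h2 <;> simp_all
    · rw [← h.offΓ y hy]
      by_contra hne
      exact hy (key y hne).1

/-- Two distinct long cycles of `σ` are impossible: one of them would be `Γ`, and the other one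
would be independent as well. -/
lemma no_second_cycle (h : Setup B Γ γ α β ε) (σ : Equiv.Perm V) (hadj : ∀ x, B.Adj x (σ x))
    {x y : V} {c : B.Walk x x} {d : B.Walk y y} (hc : c.IsCycle) (hd : d.IsCycle)
    (hce : ∀ z ∈ c.support, ∀ w, s(z, w) ∈ c.edges ↔ (w = σ z ∨ w = σ.symm z))
    (hde : ∀ z ∈ d.support, ∀ w, s(z, w) ∈ d.edges ↔ (w = σ z ∨ w = σ.symm z))
    (hy : y ∉ c.support) : False := by
  have hadj' : ∀ x, B.Adj x (σ.symm x) := fun x => by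
    have := (hadj (σ.symm x)).symm
    rwa [Equiv.apply_symm_apply] at this
  have disj : ∀ {a b : V} {p : B.Walk a a} {q : B.Walk b b},
      (∀ z ∈ p.support, ∀ w, s(z, w) ∈ p.edges ↔ (w = σ z ∨ w = σ.symm z)) →
      (∀ z ∈ q.support, ∀ w, s(z, w) ∈ q.edges ↔ (w = σ z ∨ w = σ.symm z)) →
      b ∉ p.support → ∀ z, z ∈ p.support → z ∉ q.support := by
    intro a b p q hp hq hb z hzp hzq
    refine hb (support_subset_of_closed q {w | w ∈ p.support} ?_ hzq hzp b q.start_mem_support)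
    intro w v hw hwv
    exact p.snd_mem_support_of_mem_edges
      ((hp w hw v).mpr ((hq w (q.fst_mem_support_of_mem_edges hwv) v).mp hwv))
  have edisj : ∀ {a b : V} {p : B.Walk a a} {q : B.Walk b b},
      (∀ z, z ∈ p.support → z ∉ q.support) → ∀ e ∈ p.edges, e ∉ q.edges := by
    intro a b p q hpq e
    induction e with
    | h v w =>
      intro he he₂
      exact hpq v (p.fst_mem_support_of_mem_edges he) (q.fst_mem_support_of_mem_edges he₂)
  -- any vertex off both cycles is matched by `σ`
  have htwo : ∀ z, z ∉ c.support → z ∉ d.support → σ (σ z) = z := by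
    intro z hzc hzd
    by_contra hz
    obtain ⟨g, hg, -, hge⟩ := exists_cycle_of_perms σ σ.symm hadj hadj' (Or.inr rfl)
      (x := z) (fun h' => hz (by rw [h']; simp))
    rcases bicyclic_cycle_eq h.bi hc hd hg (edisj (disj hce hde hy)) with h1 | h1
    · exact hzc ((support_iff_of_edges hc hg h1 z).mpr g.start_mem_support)
    · exact hzd ((support_iff_of_edges hd hg h1 z).mpr g.start_mem_support)
  -- if `p` is `Γ`, the matching `α` on `p` and `σ` off both cycles show that `q` is independent
  have main : ∀ {a b : V} {p : B.Walk a a} {q : B.Walk b b}, p.IsCycle → q.IsCycle →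
      (∀ z ∈ q.support, ∀ w, s(z, w) ∈ q.edges ↔ (w = σ z ∨ w = σ.symm z)) →
      (∀ z ∈ p.support, ∀ w, s(z, w) ∈ p.edges ↔ (w = σ z ∨ w = σ.symm z)) →
      (∀ z, z ∈ p.support → z ∉ q.support) →
      (∀ z, z ∉ p.support → z ∉ q.support → σ (σ z) = z) →
      (∀ e, e ∈ p.edges ↔ e ∈ Γ.edges) → False := by
    intro a b p q hp hq hqe hpe hpq h2 hE
    have hS := support_iff_of_edges hp h.cyc hE
    have hcl : ∀ {a : V} {p : B.Walk a a},
        (∀ z ∈ p.support, ∀ w, s(z, w) ∈ p.edges ↔ (w = σ z ∨ w = σ.symm z)) →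
        ∀ z, z ∉ p.support → σ z ∉ p.support := by
      intro a p hpe z hz hz'
      exact hz (p.snd_mem_support_of_mem_edges ((hpe _ hz' z).mpr (Or.inr (by simp))))
    have hind : IsIndep B q := by
      refine isIndep_of_involution q (fun z => if z ∈ p.support then α z else σ z) ?_
      intro z hz
      by_cases hzp : z ∈ p.support
      · have hαz : α z ∈ p.support := (hS _).mpr (h.alpha_mem ((hS _).mp hzp))
        simp only [hzp, hαz, if_true]
        exact ⟨h.adj₁ z, hpq _ hαz, h.inv₁ z⟩
      · have h3 := hcl hpe z hzp
        simp only [hzp, h3, if_false]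
        exact ⟨hadj z, hcl hqe z hz, h2 z hzp hz⟩
    have hE' := h.uniq b q hq hind
    have := (support_iff_of_edges hq h.cyc hE' b).mp q.start_mem_support
    exact hpq b ((hS b).mpr this) q.start_mem_support
  have hcd := disj hce hde hy
  rcases bicyclic_cycle_eq h.bi hc hd h.cyc (edisj hcd) with h1 | h1
  · exact main hc hd hde hce hcd htwo h1
  · exact main hd hc hce hde (fun z hz hz' => hcd z hz' hz) (fun z h3 h4 => htwo z h4 h3) h1

/-- A permutation that moves every vertex of `Γ` to one of its neighbours on `Γ`, and has no
2-cycle there, keeps the orientation it has at the base point `u`. -/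
lemma orient (h : Setup B Γ γ α β ε) (σ : Equiv.Perm V)
    (hne : ∀ y ∈ Γ.support, σ y ≠ σ.symm y)
    (hΓ : ∀ y ∈ Γ.support, σ y = γ y ∨ σ y = γ.symm y) (hu : σ u = γ u) :
    ∀ y ∈ Γ.support, σ y = γ y := by
  intro y hy
  refine (h.rot.trans {y | y ∈ Γ.support ∧ σ y = γ y} ⟨Γ.start_mem_support, hu⟩ ?_ y hy).2
  rintro z ⟨hz, hz'⟩
  have hγz := h.rot.mem z hz
  refine ⟨hγz, (hΓ _ hγz).resolve_right fun h1 => hne _ hγz ?_⟩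
  rw [h1, Equiv.symm_apply_apply, ← hz', Equiv.symm_apply_apply]

/-- A contributing permutation that is not an involution rotates `Γ` one way or the other and
agrees with the perfect matching elsewhere. -/
lemma eq_of_not_involution (h : Setup B Γ γ α β ε) (σ : Equiv.Perm V)
    (hadj : ∀ x, B.Adj x (σ x)) {x : V} (hx : σ (σ x) ≠ x) :
    (∀ y, y ∉ Γ.support → σ y = α y) ∧
      ((∀ y ∈ Γ.support, σ y = γ y) ∨ ∀ y ∈ Γ.support, σ y = γ.symm y) := by
  have hadj' : ∀ x, B.Adj x (σ.symm x) := fun x => by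
    have := (hadj (σ.symm x)).symm
    rwa [Equiv.apply_symm_apply] at this
  have hex := fun z (hz : σ (σ z) ≠ z) => exists_cycle_of_perms σ σ.symm hadj hadj' (Or.inr rfl)
    (x := z) (fun h' => hz (by rw [h']; simp))
  obtain ⟨c, hc, hne, hce⟩ := hex x hx
  have htwo : ∀ z, z ∉ c.support → σ (σ z) = z := by
    intro z hz
    by_contra hz'
    obtain ⟨d, hd, -, hde⟩ := hex z hz'
    exact h.no_second_cycle σ hadj hc hd hce hde hz
  have hout : ∀ z, z ∉ c.support → σ z ∉ c.support := by
    intro z hz hz'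
    exact hz (c.snd_mem_support_of_mem_edges ((hce _ hz' z).mpr (Or.inr (by simp))))
  have hE := h.uniq x c hc (isIndep_of_involution c σ fun z hz => ⟨hadj z, hout z hz, htwo z hz⟩)
  have hS := support_iff_of_edges hc h.cyc hE
  simp only [hS] at hne hce htwo hout
  have hnb : ∀ y ∈ Γ.support, ∀ z, (z = σ y ∨ z = σ.symm y) ↔ (z = γ y ∨ z = γ.symm y) := by
    intro y hy z
    rw [← hce y hy, hE, h.rot.edge y hy]
  constructor
  -- replacing `σ` by `α` on `Γ` gives a perfect matching, which must be `α`
  · have hinvol : Function.Involutive (fun z => if z ∈ Γ.support then α z else σ z) := by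
      intro z
      by_cases hz : z ∈ Γ.support
      · simp only [hz, h.alpha_mem hz, if_true, h.inv₁]
      · simp only [hz, hout z hz, if_false, htwo z hz]
    have hgood : ∀ z, B.Adj z (Function.Involutive.toPerm _ hinvol z) := by
      intro z
      change B.Adj z (if z ∈ Γ.support then α z else σ z)
      split_ifs
      · exact h.adj₁ z
      · exact hadj z
    intro y hy
    rcases h.involution_eq (Function.Involutive.toPerm _ hinvol) hgood hinvol with h1 | h1
    · have := Equiv.congr_fun h1 y
      simpa [hy] using this
    · have := Equiv.congr_fun h1 u
      simp at this
      exact absurd this (h.alpha_ne_beta Γ.start_mem_support)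
  · have hu := Γ.start_mem_support
    rcases (hnb u hu (σ u)).mp (Or.inl rfl) with h1 | h1
    · left
      exact h.orient σ hne (fun y hy => (hnb y hy _).mp (Or.inl rfl)) h1
    · right
      have h2 : σ.symm u = γ u := by
        rcases (hnb u hu (γ u)).mpr (Or.inl rfl) with h2 | h2
        · exact absurd (h2.trans h1) (h.rot.ne u hu)
        · exact h2.symm
      have h3 := h.orient σ.symm (fun y hy => (hne y hy).symm)
        (fun y hy => (hnb y hy _).mp (Or.inr rfl)) h2
      intro y hy
      rcases (hnb y hy (γ.symm y)).mpr (Or.inr rfl) with h4 | h4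
      · exact h4.symm
      · exact absurd ((h3 y hy).symm.trans h4.symm) (h.rot.ne y hy)

end Setup

/-! ### The determinant -/

/-- The perfect matching made of the edges `{x, γ x}` of `c` with `x` of the given colour, and of
a perfect matching `m` off `c`. -/
lemma exists_matching {V : Type*} [Fintype V] [DecidableEq V] {G : SimpleGraph V} {u : V}
    {c : G.Walk u u} {γ : Equiv.Perm V} {ε : V → Prop} (R : Rotation c γ ε) (m : V → V)
    (hm : ∀ x, x ∉ c.support → G.Adj x (m x) ∧ m x ∉ c.support ∧ m (m x) = x)
    (δ : V → Prop) (hδ : ∀ x ∈ c.support, (δ (γ x) ↔ ¬ δ x)) :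
    ∃ α : Equiv.Perm V, (∀ x, G.Adj x (α x)) ∧ (∀ x, α (α x) = x) ∧
      (∀ x ∈ c.support, δ x → α x = γ x) ∧ (∀ x ∈ c.support, ¬ δ x → α x = γ.symm x) ∧
      ∀ x, x ∉ c.support → α x = m x := by
  classical
  have hδ' : ∀ x ∈ c.support, (δ (γ.symm x) ↔ ¬ δ x) := by
    intro x hx
    have := hδ _ (R.symm_mem x hx)
    rw [Equiv.apply_symm_apply] at this
    tauto
  have hinv : Function.Involutive
      (fun x => if x ∈ c.support then (if δ x then γ x else γ.symm x) else m x) := by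
    intro x
    by_cases hx : x ∈ c.support
    · by_cases hd : δ x
      · have : ¬ δ (γ x) := by rw [hδ x hx]; simpa using hd
        simp [hx, hd, R.mem x hx, this]
      · have : δ (γ.symm x) := by rw [hδ' x hx]; exact hd
        simp [hx, hd, R.symm_mem x hx, this]
    · simp [hx, hm x hx]
  refine ⟨Function.Involutive.toPerm _ hinv, ?_, hinv, ?_, ?_, ?_⟩
  · intro x
    change G.Adj x (if x ∈ c.support then (if δ x then γ x else γ.symm x) else m x)
    split_ifs with h1 h2
    · exact c.adj_of_mem_edges ((R.edge x h1 _).mpr (Or.inl rfl))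
    · exact c.adj_of_mem_edges ((R.edge x h1 _).mpr (Or.inr rfl))
    · exact (hm x h1).1
  · intro x hx hd; simp [hx, hd]
  · intro x hx hd; simp [hx, hd]
  · intro x hx; simp [hx]

lemma entry_mul_entry {V : Type*} {B : SimpleGraph V} {A : Matrix V V ℂ}
    (hA : ThreeColored B A) {x y : V} (h : B.Adj x y) : A y x * A x y = 1 := by
  rw [← hA.1.apply x y]
  rcases hA.2.2.1 y x h.symm with h1 | h1 | h1 | h1 <;> rw [h1] <;> simp

/-- Each matched pair contributes `A y x * A x y = 1`. -/
lemma prod_matching {V : Type*} [DecidableEq V] {B : SimpleGraph V} {A : Matrix V V ℂ}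
    (hA : ThreeColored B A) (s : Finset V) (m : V → V)
    (hm : ∀ x ∈ s, B.Adj x (m x) ∧ m x ∈ s ∧ m (m x) = x) : ∏ x ∈ s, A (m x) x = 1 := by
  refine Finset.prod_involution (fun x _ => m x) ?_ ?_ ?_ ?_
  · intro x hx
    rw [(hm x hx).2.2]
    exact entry_mul_entry hA (hm x hx).1
  · intro x hx _
    exact (hm x hx).1.ne'
  · intro x hx
    exact (hm x hx).2.1
  · intro x hx
    exact (hm x hx).2.2

/-- Both cases of the theorem in one formula: the determinant is the sum over the two perfect
matchings and the two orientations of `Γ`. -/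
lemma det_eq {V : Type*} [Fintype V] [DecidableEq V] (B : SimpleGraph V)
    (A : Matrix V V ℂ) (hA : ThreeColored B A) (hB : Bicyclic V B) (hpm : HasPM B)
    {u : V} (Γ : B.Walk u u) (hΓ : Γ.IsCycle) (hind : IsIndep B Γ)
    (huniq : ∀ (v : V) (d : B.Walk v v), d.IsCycle → IsIndep B d →
      ∀ e, e ∈ d.edges ↔ e ∈ Γ.edges) :
    A.det = (-1) ^ (Fintype.card V / 2) *
      (2 - (-1) ^ (Γ.length / 2) * (walkWeight A Γ + star (walkWeight A Γ))) := by
  obtain ⟨γ, ε, R⟩ := exists_rotation hΓ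
  obtain ⟨m, hm⟩ := involution_of_isIndep hind
  obtain ⟨f, hf⟩ := involution_of_hasPM hpm
  -- `μ` is the perfect matching of `B - V(Γ)`, extended by the identity on `Γ`
  have hμinv : Function.Involutive (fun x => if x ∈ Γ.support then x else m x) := by
    intro x
    by_cases hx : x ∈ Γ.support
    · simp [hx]
    · simp [hx, hm x hx]
  obtain ⟨μ, hμ⟩ : ∃ μ : Equiv.Perm V, ∀ x, μ x = if x ∈ Γ.support then x else m x :=
    ⟨Function.Involutive.toPerm _ hμinv, fun x => rfl⟩
  have full : ∀ σ : Equiv.Perm V, (∀ x, B.Adj x (σ x)) → (∀ x, σ (σ x) = x) →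
      ∃ k, Fintype.card V = 2 * k ∧ Equiv.Perm.sign σ = (-1) ^ k := by
    intro σ h1 h2
    obtain ⟨k, hk, hs⟩ := sign_involution σ h2
    refine ⟨k, ?_, hs⟩
    rw [← hk, ← Finset.card_univ]
    congr 1
    ext x
    simp [(h1 x).ne']
  obtain ⟨N, hN, -⟩ := full (Function.Involutive.toPerm f fun x => (hf x).2)
    (fun x => (hf x).1) (fun x => (hf x).2)
  obtain ⟨k, hk, hμsign⟩ := sign_involution μ (by
    intro x
    rw [hμ, hμ]
    exact hμinv x)
  have hμsupp : μ.support = (Γ.support.toFinset)ᶜ := by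
    ext x
    by_cases hx : x ∈ Γ.support
    · simp [hμ, hx]
    · simp [hμ, hx, (hm x hx).1.ne']
  have hkl : 2 * k + Γ.length = 2 * N := by
    have := Finset.card_add_card_compl Γ.support.toFinset
    rw [R.card, ← hμsupp, hk, hN] at this
    omega
  obtain ⟨l, hl⟩ : ∃ l, Γ.length = 2 * l := ⟨N - k, by omega⟩
  have hcol := R.color ⟨l, by omega⟩
  obtain ⟨α, hα1, hα2, hα3, hα4, hα5⟩ := exists_matching R m hm ε hcol
  obtain ⟨β, hβ1, hβ2, hβ3, hβ4, hβ5⟩ := exists_matching R m hm (fun x => ¬ ε x)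
    (fun x hx => not_congr (hcol x hx))
  have S : Setup B Γ γ α β ε :=
    { bi := hB, cyc := hΓ, uniq := huniq, rot := R, adj₁ := hα1, adj₂ := hβ1, inv₁ := hα2,
      inv₂ := hβ2
      onΓ := fun x hx => by
        by_cases h : ε x
        · exact Or.inl ⟨hα3 x hx h, hβ4 x hx (not_not.mpr h)⟩
        · exact Or.inr ⟨hα4 x hx h, hβ3 x hx h⟩
      offΓ := fun x hx => (hα5 x hx).trans (hβ5 x hx).symm }
  obtain ⟨τ, hτ⟩ : ∃ τ : Equiv.Perm V, τ = μ * γ := ⟨_, rfl⟩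
  have hτon : ∀ x ∈ Γ.support, τ x = γ x := by
    intro x hx
    rw [hτ, Equiv.Perm.mul_apply, hμ, if_pos (R.mem x hx)]
  have hτoff : ∀ x, x ∉ Γ.support → τ x = m x := by
    intro x hx
    rw [hτ, Equiv.Perm.mul_apply, R.fix x hx, hμ, if_neg hx]
  have hτson : ∀ x ∈ Γ.support, τ.symm x = γ.symm x := by
    intro x hx
    rw [Equiv.symm_apply_eq, hτon _ (R.symm_mem x hx), Equiv.apply_symm_apply]
  have hτsoff : ∀ x, x ∉ Γ.support → τ.symm x = m x := by
    intro x hx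
    rw [Equiv.symm_apply_eq, hτoff _ (hm x hx).2.1, (hm x hx).2.2]
  have hτsign : Equiv.Perm.sign τ = -(-1) ^ k := by
    rw [hτ, Equiv.Perm.sign_mul, hμsign, R.sign, hl, pow_mul]
    simp
  have hw := R.weight A
  have hherm : ∀ x y, A x y = star (A y x) := fun x y => (hA.1.apply x y).symm
  have hτprod : ∏ x, A (τ x) x = star (walkWeight A Γ) := by
    rw [← Finset.prod_mul_prod_compl Γ.support.toFinset, hw, star_prod]
    have h1 : ∏ x ∈ (Γ.support.toFinset)ᶜ, A (τ x) x = 1 := by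
      rw [← prod_matching hA (Γ.support.toFinset)ᶜ m]
      · refine Finset.prod_congr rfl fun x hx => ?_
        rw [hτoff x (by simpa using hx)]
      · intro x hx
        have := hm x (by simpa using hx)
        simpa using this
    rw [h1, mul_one]
    refine Finset.prod_congr rfl fun x hx => ?_
    rw [hτon x (by simpa using hx), hherm]
  have hτsprod : ∏ x, A (τ.symm x) x = walkWeight A Γ := by
    rw [← star_star (walkWeight A Γ), ← hτprod, star_prod,
      ← Equiv.prod_comp τ (fun x => A (τ.symm x) x)]
    refine Finset.prod_congr rfl fun x _ => ?_
    rw [Equiv.symm_apply_apply, hherm]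
  have hpair : ∀ σ : Equiv.Perm V, (∀ x, B.Adj x (σ x)) → (∀ x, σ (σ x) = x) →
      ((Equiv.Perm.sign σ : ℤ) : ℂ) * ∏ x, A (σ x) x = (-1) ^ N := by
    intro σ h1 h2
    obtain ⟨j, hj, hs⟩ := full σ h1 h2
    have : j = N := by omega
    rw [prod_matching hA Finset.univ σ (fun x _ => ⟨h1 x, Finset.mem_univ _, h2 x⟩), hs, this]
    simp
  have hu := Γ.start_mem_support
  have hγu := R.ne u hu
  have hαβ : α ≠ β := fun h => S.alpha_ne_beta hu (by rw [h])
  have hττ : τ ≠ τ.symm := fun h => hγu (by rw [← hτon u hu, ← hτson u hu, ← h])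
  -- `τ` is not an involution, hence differs from `α` and `β`
  have hτne : ∀ σ : Equiv.Perm V, (∀ x, σ (σ x) = x) → σ ≠ τ ∧ σ ≠ τ.symm := by
    intro σ hσ
    have hσ' : σ = σ.symm := by
      ext x; rw [Equiv.eq_symm_apply, hσ]
    constructor
    · rintro rfl
      exact hττ hσ'
    · rintro rfl
      exact hττ (by simpa using hσ'.symm)
  have hsum : A.det = ∑ σ ∈ ({α, β, τ, τ.symm} : Finset (Equiv.Perm V)),
      ((Equiv.Perm.sign σ : ℤ) : ℂ) * ∏ x, A (σ x) x := by
    rw [Matrix.det_apply']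
    symm
    refine Finset.sum_subset (Finset.subset_univ _) fun σ _ hσ => ?_
    simp only [Finset.mem_insert, Finset.mem_singleton, not_or] at hσ
    obtain ⟨x, hx⟩ : ∃ x, ¬ B.Adj x (σ x) := by
      by_contra hgood
      push Not at hgood
      by_cases hinv : ∀ x, σ (σ x) = x
      · rcases S.involution_eq σ hgood hinv with h | h
        · exact hσ.1 h
        · exact hσ.2.1 h
      · push Not at hinv
        obtain ⟨x, hx⟩ := hinv
        obtain ⟨hoff, hon | hon⟩ := S.eq_of_not_involution σ hgood hx
        · refine hσ.2.2.1 (Equiv.ext fun y => ?_)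
          by_cases hy : y ∈ Γ.support
          · rw [hon y hy, hτon y hy]
          · rw [hoff y hy, hτoff y hy, hα5 y hy]
        · refine hσ.2.2.2 (Equiv.ext fun y => ?_)
          by_cases hy : y ∈ Γ.support
          · rw [hon y hy, hτson y hy]
          · rw [hoff y hy, hτsoff y hy, hα5 y hy]
    have h0 : A (σ x) x = 0 := by
      by_cases h : σ x = x
      · rw [h]; exact hA.2.1 x
      · exact hA.2.2.2 _ _ h fun h' => hx h'.symm
    have hz : ∏ y, A (σ y) y = 0 :=
      Finset.prod_eq_zero (f := fun y => A (σ y) y) (Finset.mem_univ x) h0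
    rw [hz, mul_zero]
  rw [hsum, Finset.sum_insert, Finset.sum_insert, Finset.sum_pair hττ, hpair α hα1 hα2,
    hpair β hβ1 hβ2, hτprod, hτsprod, Equiv.Perm.sign_symm, hτsign, hN, hl]
  · have hNkl : N = k + l := by omega
    have h1 : ((-1 : ℂ) ^ l) * (-1) ^ l = 1 := by
      rw [← mul_pow]; simp
    simp only [Nat.mul_div_cancel_left _ (Nat.succ_pos 1)]
    push_cast
    rw [hNkl, pow_add]
    linear_combination (-1 : ℂ) ^ k * (walkWeight A Γ + star (walkWeight A Γ)) * h1
  · simp only [Finset.mem_insert, Finset.mem_singleton, not_or]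
    exact hτne β hβ2
  · simp only [Finset.mem_insert, Finset.mem_singleton, not_or]
    exact ⟨hαβ, hτne α hα2⟩

/-- Determinant of a connected bicyclic 3-colored digraph with a
perfect matching and exactly one independent cycle `Γ`. -/
theorem stmt6 {V : Type*} [Fintype V] [DecidableEq V] (B : SimpleGraph V)
    (A : Matrix V V ℂ) (hA : ThreeColored B A) (hB : Bicyclic V B) (hpm : HasPM B)
    {u : V} (Γ : B.Walk u u) (hΓ : Γ.IsCycle) (hind : IsIndep B Γ)
    (huniq : ∀ (v : V) (d : B.Walk v v), d.IsCycle → IsIndep B d → SameCycle d Γ) :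
    (walkWeight A Γ ∈ ({1, -1} : Set ℂ) →
      A.det = 2 * (-1) ^ (Fintype.card V / 2) *
        (1 - walkWeight A Γ * (-1) ^ (Γ.length / 2))) ∧
    (walkWeight A Γ ∈ ({Complex.I, -Complex.I} : Set ℂ) →
      A.det = 2 * (-1) ^ (Fintype.card V / 2)) := by
  have huniq' : ∀ (v : V) (d : B.Walk v v), d.IsCycle → IsIndep B d →
      ∀ e, e ∈ d.edges ↔ e ∈ Γ.edges := by
    intro v d hd hdi e
    have := huniq v d hd hdi
    rw [SameCycle, Finset.ext_iff] at this
    simpa using this e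
  have hdet := det_eq B A hA hB hpm Γ hΓ hind huniq'
  constructor
  · rintro (hw | hw)
    · rw [hdet, hw]
      simp
      ring
    · rw [Set.mem_singleton_iff] at hw
      rw [hdet, hw]
      simp
      ring
  · rintro (hw | hw)
    · rw [hdet, hw]
      simp
      ring
    · rw [Set.mem_singleton_iff] at hw
      rw [hdet, hw]
      simp
      ring
end
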